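/- Let ρ_t be a d×d Hermitian positive definite density matrix, G a d×d Hermitian complex matrix, and η > 0. Then, over the set 𝒟 of d×d density matrices, the extended-real-valued function ρ ↦ η tr(G(ρ − ρ_t)) + D_h(ρ, ρ_t) (with value +∞ at singular ρ) and the extended-real-valued function ρ ↦ tr((ηG + ρ_t⁻¹)ρ) − log det ρ differ by a constant independent of ρ; consequently they have the same set of minimizers over 𝒟, and the unique minimizer is ρ_{t+1} = (ηG + ρ_t⁻¹ + θI)⁻¹, where θ is the unique real number exceeding −λ_min(ηG + ρ_t⁻¹) with tr((ηG + ρ_t⁻¹ + θI)⁻¹) = 1. -/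

import Mathlib

/-!
Write `A = ηG + ρt⁻¹`. The two objectives differ by `log det ρt - η tr(Gρt) - d`.

If `M = A + θI` is positive definite then on density matrices `tr(Mρ) = tr(Aρ) + θ`, so both
objectives are translates of `ρ ↦ tr(Mρ) - log det ρ`. Factoring `M = BᴴB` and passing to the
eigenvalues `xᵢ` of `BρBᴴ`, the inequality `log x ≤ x - 1` (strict for `x ≠ 1`) shows that this
function is at least `d + log det M`, with equality only when `BρBᴴ = 1`, i.e. `ρ = M⁻¹`
(`burg_bound`), and the bound is attained there (`burg_at_inv`). Thus `M⁻¹` is the unique minimizer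
as soon as it has trace one (`minimizer_of_shift`).

A suitable `θ` exists by the intermediate value theorem applied to `θ ↦ ∑ᵢ 1 / (λᵢ + θ)`, with
`λᵢ` the eigenvalues of `A`, on `[1 - λ_min, d - λ_min]` (`exists_shift`). It is unique because two
such `θ` yield the same minimizer.
-/

open Matrix
open scoped ComplexOrder

/-- The set of `d × d` density matrices. -/
def densityMatrices (d : ℕ) : Set (Matrix (Fin d) (Fin d) ℂ) :=
  {ρ | ρ.PosSemidef ∧ ρ.trace = 1}

open Classical in
/-- The extended-real-valued mirror descent objective
`ρ ↦ η tr(G(ρ - ρt)) + D_h(ρ, ρt)` with the Burg-entropy Bregman divergence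
`D_h(ρ, σ) = log det σ - log det ρ + tr(σ⁻¹ρ) - d`, equal to `+∞` at
singular `ρ`. -/
noncomputable def mirrorObj (d : ℕ) (η : ℝ) (G ρt ρ : Matrix (Fin d) (Fin d) ℂ) : EReal :=
  if ρ.det = 0 then ⊤
  else ((η * ((G * (ρ - ρt)).trace).re +
    (Real.log ((ρt.det).re) - Real.log ((ρ.det).re) + ((ρt⁻¹ * ρ).trace).re - d) : ℝ) : EReal)

open Classical in
/-- The extended-real-valued objective `ρ ↦ tr((ηG + ρt⁻¹)ρ) - log det ρ`,
equal to `+∞` at singular `ρ`. -/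
noncomputable def linearizedObj (d : ℕ) (η : ℝ) (G ρt ρ : Matrix (Fin d) (Fin d) ℂ) : EReal :=
  if ρ.det = 0 then ⊤
  else (((((η • G + ρt⁻¹) * ρ).trace).re - Real.log ((ρ.det).re) : ℝ) : EReal)

/-- The inequality `log x ≤ x - 1`, strict for `x ≠ 1`, summed over the eigenvalues of `X`. -/
lemma burg_one {d : ℕ} {X : Matrix (Fin d) (Fin d) ℂ} (hX : X.PosDef) :
    (d : ℝ) ≤ X.trace.re - Real.log X.det.re ∧
      (X.trace.re - Real.log X.det.re ≤ d → X = 1) := by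
  have hpos := hX.eigenvalues_pos
  have htr : X.trace.re = ∑ i, hX.1.eigenvalues i := by
    rw [hX.1.trace_eq_sum_eigenvalues]; simp
  have hdet : X.det.re = ∏ i, hX.1.eigenvalues i := by
    rw [hX.1.det_eq_prod_eigenvalues]
    simp [← Complex.ofReal_prod]
  have hsum : (d : ℝ) = ∑ _i : Fin d, (1 : ℝ) := by simp
  rw [htr, hdet, Real.log_prod (fun i _ => (hpos i).ne'), ← Finset.sum_sub_distrib]
  have hterm : ∀ i, 1 ≤ hX.1.eigenvalues i - Real.log (hX.1.eigenvalues i) := fun i => by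
    linarith [Real.log_le_sub_one_of_pos (hpos i)]
  refine ⟨hsum ▸ Finset.sum_le_sum fun i _ => hterm i, fun hle => ?_⟩
  have hone : ∀ i, hX.1.eigenvalues i = 1 := by
    by_contra! hne
    obtain ⟨i, hi⟩ := hne
    refine absurd hle (not_le.mpr ?_)
    rw [hsum]
    refine Finset.sum_lt_sum (fun j _ => hterm j) ⟨i, Finset.mem_univ i, ?_⟩
    linarith [Real.log_lt_sub_one_of_pos (hpos i) hi]
  have hfun : (RCLike.ofReal ∘ hX.1.eigenvalues : Fin d → ℂ) = fun _ => 1 := by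
    funext i; simp [hone i]
  rw [hX.1.spectral_theorem, hfun, Matrix.diagonal_one, map_one]

/-- The lower bound `d + log det M` for `ρ ↦ tr(Mρ) - log det ρ`, attained at most at `ρ = M⁻¹`:
the congruence `ρ ↦ BρBᴴ`, where `M = BᴴB`, reduces it to `burg_one`. -/
lemma burg_bound {d : ℕ} {M ρ : Matrix (Fin d) (Fin d) ℂ} (hM : M.PosDef) (hρ : ρ.PosDef) :
    (d : ℝ) + Real.log M.det.re ≤ (M * ρ).trace.re - Real.log ρ.det.re ∧
      ((M * ρ).trace.re - Real.log ρ.det.re ≤ d + Real.log M.det.re → ρ = M⁻¹) := by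
  obtain ⟨B, hB⟩ : ∃ B : Matrix (Fin d) (Fin d) ℂ, M = Bᴴ * B := by
    open scoped MatrixOrder in
    exact CStarAlgebra.nonneg_iff_eq_star_mul_self.mp hM.posSemidef.nonneg
  have hBu : IsUnit B := by
    have h := hM.isUnit
    rw [hB, Matrix.isUnit_iff_isUnit_det, Matrix.det_mul] at h
    exact (Matrix.isUnit_iff_isUnit_det B).mpr (isUnit_of_mul_isUnit_right h)
  have hX : (B * ρ * Bᴴ).PosDef := hBu.posDef_star_right_conjugate_iff.mpr hρ
  have htr : (B * ρ * Bᴴ).trace = (M * ρ).trace := by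
    rw [hB, Matrix.trace_mul_comm, Matrix.mul_assoc]
  have hMd := (Complex.pos_iff.mp hM.det_pos)
  have hρd := (Complex.pos_iff.mp hρ.det_pos)
  have hdet : (B * ρ * Bᴴ).det.re = M.det.re * ρ.det.re := by
    have : (B * ρ * Bᴴ).det = M.det * ρ.det := by
      rw [hB]; simp only [Matrix.det_mul]; ring
    rw [this, Complex.mul_re, ← hMd.2]; ring
  have hlog := Real.log_mul hMd.1.ne' hρd.1.ne'
  obtain ⟨h1, h2⟩ := burg_one hX
  rw [htr, hdet, hlog] at h1 h2
  refine ⟨by linarith, fun hle => ?_⟩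
  have hX1 := h2 (by linarith)
  -- `B (ρ Bᴴ) = 1` gives `(ρ Bᴴ) B = 1`.
  rw [Matrix.mul_assoc, mul_eq_one_comm, Matrix.mul_assoc, ← hB] at hX1
  exact (Matrix.inv_eq_left_inv hX1).symm

lemma burg_at_inv {d : ℕ} {M : Matrix (Fin d) (Fin d) ℂ} (hM : M.PosDef) :
    (M * M⁻¹).trace.re - Real.log (M⁻¹).det.re = d + Real.log M.det.re := by
  have hu := (Matrix.isUnit_iff_isUnit_det M).mp hM.isUnit
  have hMd := Complex.pos_iff.mp hM.det_pos
  have hre : M.det = (M.det.re : ℂ) := Complex.ext (by simp) (by simp [← hMd.2])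
  have hdet : (M⁻¹).det.re = (M.det.re)⁻¹ := by
    rw [Matrix.det_nonsing_inv, Ring.inverse_eq_inv', hre, ← Complex.ofReal_inv]; simp
  rw [Matrix.mul_nonsing_inv _ hu, hdet, Real.log_inv]
  simp

/-- In an eigenbasis of `A` the trace of `(A + θI)⁻¹` is `∑ᵢ 1 / (λᵢ + θ)`, which takes the value
`1` by the intermediate value theorem. -/
lemma exists_shift {d : ℕ} (hd : 0 < d) {A : Matrix (Fin d) (Fin d) ℂ} (hA : A.IsHermitian) :
    ∃ θ : ℝ, (A + θ • 1).PosDef ∧ (((A + θ • 1)⁻¹).trace).re = 1 := by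
  have : Nonempty (Fin d) := ⟨⟨0, hd⟩⟩
  obtain ⟨k, hk⟩ := Finite.exists_min hA.eigenvalues
  have hd1 : (1 : ℝ) ≤ d := by exact_mod_cast hd
  set l := hA.eigenvalues with hl
  let f : ℝ → ℝ := fun θ => ∑ i, (l i + θ)⁻¹
  have hpos : ∀ θ ∈ Set.Icc (1 - l k) (d - l k), ∀ i, 0 < l i + θ := fun θ hθ i => by
    linarith [hk i, hθ.1]
  have hcont : ContinuousOn f (Set.Icc (1 - l k) (d - l k)) := by
    refine continuousOn_finsetSum _ fun i _ => ?_
    exact ContinuousOn.inv₀ (by fun_prop) fun θ hθ => (hpos θ hθ i).ne'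
  -- At the left end the term of the least eigenvalue is already `1`.
  have hleft : 1 ≤ f (1 - l k) := by
    have h := Finset.single_le_sum (f := fun i => (l i + (1 - l k))⁻¹)
      (fun i _ => (inv_pos.mpr (hpos (1 - l k) ⟨le_rfl, by linarith⟩ i)).le) (Finset.mem_univ k)
    simpa using h
  -- At the right end each of the `d` terms is at most `1 / d`.
  have hright : f (d - l k) ≤ 1 := by
    calc f (d - l k) ≤ ∑ _i : Fin d, (d : ℝ)⁻¹ := by
          refine Finset.sum_le_sum fun i _ => inv_anti₀ (by linarith) ?_
          linarith [hk i]
      _ = 1 := by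
          simp only [Finset.sum_const, Finset.card_univ, Fintype.card_fin, nsmul_eq_mul]
          exact mul_inv_cancel₀ (by linarith)
  obtain ⟨θ, hθ, hfθ⟩ :=
    intermediate_value_Icc' (by linarith : 1 - l k ≤ d - l k) hcont ⟨hright, hleft⟩
  refine ⟨θ, ?_⟩
  have hp := hpos θ hθ
  let U : Matrix (Fin d) (Fin d) ℂ := (hA.eigenvectorUnitary : Matrix (Fin d) (Fin d) ℂ)
  have hUU : U * star U = 1 := Unitary.coe_mul_star_self _
  have hUU' : star U * U = 1 := Unitary.coe_star_mul_self _
  have hdiag : A + θ • 1 = U * diagonal (fun i => ((l i + θ : ℝ) : ℂ)) * star U := by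
    have hs : A = U * diagonal (RCLike.ofReal ∘ l) * star U := by
      conv_lhs => rw [hA.spectral_theorem, Unitary.conjStarAlgAut_apply]
    have hadd : diagonal (fun i => ((l i + θ : ℝ) : ℂ)) =
        diagonal (RCLike.ofReal ∘ l) + θ • (1 : Matrix (Fin d) (Fin d) ℂ) := by
      ext i j
      by_cases h : i = j
      · subst h; simp
      · simp [h]
    rw [hadd, Matrix.mul_add, Matrix.add_mul, ← hs]
    simp [hUU]
  have hinv : (A + θ • 1)⁻¹ = U * diagonal (fun i => (((l i + θ)⁻¹ : ℝ) : ℂ)) * star U := by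
    apply Matrix.inv_eq_right_inv
    rw [hdiag]
    have hDD : diagonal (fun i => ((l i + θ : ℝ) : ℂ)) *
        diagonal (fun i => (((l i + θ)⁻¹ : ℝ) : ℂ)) = 1 := by
      rw [Matrix.diagonal_mul_diagonal, ← Matrix.diagonal_one]
      congr 1
      funext i
      rw [← Complex.ofReal_mul, mul_inv_cancel₀ (hp i).ne', Complex.ofReal_one]
    calc _ = U * (diagonal (fun i => ((l i + θ : ℝ) : ℂ)) * (star U * U) *
          diagonal (fun i => (((l i + θ)⁻¹ : ℝ) : ℂ))) * star U := by
          simp only [Matrix.mul_assoc]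
      _ = 1 := by rw [hUU', Matrix.mul_one, hDD, Matrix.mul_one, hUU]
  have hUunit : IsUnit U := IsUnit.of_mul_eq_one _ hUU
  constructor
  · rw [hdiag, hUunit.posDef_star_right_conjugate_iff, Matrix.posDef_diagonal_iff]
    intro i
    exact_mod_cast hp i
  · rw [hinv, Matrix.trace_mul_comm, ← Matrix.mul_assoc, hUU', Matrix.one_mul,
      Matrix.trace_diagonal, ← Complex.ofReal_sum, Complex.ofReal_re]
    exact hfθ

lemma mirrorObj_eq (d : ℕ) (η : ℝ) (G ρt ρ : Matrix (Fin d) (Fin d) ℂ) :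
    mirrorObj d η G ρt ρ = linearizedObj d η G ρt ρ +
      ((Real.log ρt.det.re - η * (G * ρt).trace.re - d : ℝ) : EReal) := by
  unfold mirrorObj linearizedObj
  split_ifs with h
  · exact (EReal.top_add_coe _).symm
  · rw [← EReal.coe_add]
    congr 1
    simp only [Matrix.mul_sub, Matrix.add_mul, Matrix.trace_sub, Matrix.trace_add, Complex.sub_re,
      Complex.add_re, Matrix.smul_mul, Matrix.trace_smul, Complex.smul_re, smul_eq_mul]
    ring

lemma mirrorObj_le_iff (d : ℕ) (η : ℝ) (G ρt ρ σ : Matrix (Fin d) (Fin d) ℂ) :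
    mirrorObj d η G ρt σ ≤ mirrorObj d η G ρt ρ ↔
      linearizedObj d η G ρt σ ≤ linearizedObj d η G ρt ρ := by
  rw [mirrorObj_eq, mirrorObj_eq]
  exact (EReal.addLECancellable_coe _).add_le_add_iff_right

/-- On a nonsingular matrix of trace one, replacing `A = ηG + ρt⁻¹` by `A + θI` shifts the
linearized objective by the constant `θ`. -/
lemma linearizedObj_eq_shift {d : ℕ} (η θ : ℝ) (G ρt : Matrix (Fin d) (Fin d) ℂ)
    {ρ : Matrix (Fin d) (Fin d) ℂ} (hρ : ρ.det ≠ 0) (hρ1 : ρ.trace = 1) :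
    linearizedObj d η G ρt ρ =
      ((((η • G + ρt⁻¹ + θ • 1) * ρ).trace.re - Real.log ρ.det.re - θ : ℝ) : EReal) := by
  unfold linearizedObj
  rw [if_neg hρ, Matrix.add_mul (η • G + ρt⁻¹)]
  congr 1
  simp only [Matrix.smul_mul, Matrix.one_mul, Matrix.trace_add, Matrix.trace_smul, hρ1,
    Complex.add_re, Complex.smul_re, Complex.one_re, smul_eq_mul, mul_one]
  ring

/-- If `M = ηG + ρt⁻¹ + θI` is positive definite and `M⁻¹` has trace one, then `M⁻¹` is the unique
minimizer of the mirror descent objective over the density matrices. -/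
lemma minimizer_of_shift {d : ℕ} {η θ : ℝ} {G ρt : Matrix (Fin d) (Fin d) ℂ}
    (hM : (η • G + ρt⁻¹ + θ • 1).PosDef)
    (htr : (((η • G + ρt⁻¹ + θ • 1)⁻¹).trace).re = 1) :
    (η • G + ρt⁻¹ + θ • 1)⁻¹ ∈ densityMatrices d ∧
       (∀ ρ ∈ densityMatrices d,
         mirrorObj d η G ρt ((η • G + ρt⁻¹ + θ • 1)⁻¹) ≤ mirrorObj d η G ρt ρ) ∧
       (∀ σ ∈ densityMatrices d,
         (∀ ρ ∈ densityMatrices d, mirrorObj d η G ρt σ ≤ mirrorObj d η G ρt ρ) →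
         σ = (η • G + ρt⁻¹ + θ • 1)⁻¹) := by
  have hI := hM.inv
  have htr1 : ((η • G + ρt⁻¹ + θ • 1)⁻¹).trace = 1 := by
    refine Complex.ext (by simpa using htr) ?_
    simpa using (Complex.nonneg_iff.mp hI.posSemidef.trace_nonneg).2.symm
  have hmem : (η • G + ρt⁻¹ + θ • 1)⁻¹ ∈ densityMatrices d := ⟨hI.posSemidef, htr1⟩
  have hIeq := linearizedObj_eq_shift η θ G ρt hI.det_pos.ne' htr1
  refine ⟨hmem, fun ρ hρ => ?_, fun σ hσ hmin => ?_⟩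
  · rw [mirrorObj_le_iff]
    by_cases h0 : ρ.det = 0
    · simp [linearizedObj, h0]
    · rw [hIeq, linearizedObj_eq_shift η θ G ρt h0 hρ.2, EReal.coe_le_coe_iff]
      linarith [(burg_bound hM (hρ.1.posDef_iff_det_ne_zero.mpr h0)).1, burg_at_inv hM]
  · have hle := hmin _ hmem
    rw [mirrorObj_le_iff, hIeq] at hle
    by_cases h0 : σ.det = 0
    · rw [linearizedObj, if_pos h0] at hle
      exact absurd hle (not_le.mpr (EReal.coe_lt_top _))
    · rw [linearizedObj_eq_shift η θ G ρt h0 hσ.2, EReal.coe_le_coe_iff] at hle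
      exact (burg_bound hM (hσ.1.posDef_iff_det_ne_zero.mpr h0)).2 (by linarith [burg_at_inv hM])

/-- over the set of density matrices, the mirror descent
objective and `ρ ↦ tr((ηG + ρt⁻¹)ρ) - log det ρ` differ by a constant, hence
have the same minimizers; the unique minimizer is
`ρ_{t+1} = (ηG + ρt⁻¹ + θI)⁻¹` where `θ` is the unique real exceeding
`-λ_min(ηG + ρt⁻¹)` (i.e. the unique `θ` making `ηG + ρt⁻¹ + θI` positive
definite) with `tr((ηG + ρt⁻¹ + θI)⁻¹) = 1`. -/
theorem mirror_descent_update (d : ℕ) (hd : 0 < d)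
    (ρt G : Matrix (Fin d) (Fin d) ℂ)
    (hρt : ρt.PosDef) (hρt1 : ρt.trace = 1) (hG : G.IsHermitian)
    (η : ℝ) (hη : 0 < η) :
    (∃ c : ℝ, ∀ ρ ∈ densityMatrices d,
      mirrorObj d η G ρt ρ = linearizedObj d η G ρt ρ + (c : EReal)) ∧
    (∀ σ ∈ densityMatrices d,
      ((∀ ρ ∈ densityMatrices d, mirrorObj d η G ρt σ ≤ mirrorObj d η G ρt ρ) ↔
       (∀ ρ ∈ densityMatrices d, linearizedObj d η G ρt σ ≤ linearizedObj d η G ρt ρ))) ∧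
    (∃! θ : ℝ, (η • G + ρt⁻¹ + θ • 1).PosDef ∧
      (((η • G + ρt⁻¹ + θ • 1)⁻¹).trace).re = 1) ∧
    (∀ θ : ℝ, (η • G + ρt⁻¹ + θ • 1).PosDef →
      (((η • G + ρt⁻¹ + θ • 1)⁻¹).trace).re = 1 →
      ((η • G + ρt⁻¹ + θ • 1)⁻¹ ∈ densityMatrices d ∧
       (∀ ρ ∈ densityMatrices d,
         mirrorObj d η G ρt ((η • G + ρt⁻¹ + θ • 1)⁻¹) ≤ mirrorObj d η G ρt ρ) ∧
       (∀ σ ∈ densityMatrices d,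
         (∀ ρ ∈ densityMatrices d, mirrorObj d η G ρt σ ≤ mirrorObj d η G ρt ρ) →
         σ = (η • G + ρt⁻¹ + θ • 1)⁻¹))) := by
  have hA : (η • G + ρt⁻¹).IsHermitian := by
    refine Matrix.IsHermitian.add ?_ hρt.inv.1
    rw [Matrix.IsHermitian, Matrix.conjTranspose_smul, hG.eq, star_trivial]
  refine ⟨⟨_, fun ρ _ => mirrorObj_eq d η G ρt ρ⟩, fun σ _ => ?_, ?_,
    fun θ hM htr => minimizer_of_shift hM htr⟩
  · simp only [mirrorObj_le_iff]
  · obtain ⟨θ, hM, htr⟩ := exists_shift hd hA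
    refine ⟨θ, ⟨hM, htr⟩, fun θ' ⟨hM', htr'⟩ => ?_⟩
    obtain ⟨-, -, huniq⟩ := minimizer_of_shift hM htr
    obtain ⟨hmem', hmin', -⟩ := minimizer_of_shift hM' htr'
    have hinv := huniq _ hmem' hmin'
    have heq := Matrix.inv_inj hinv
      ((Matrix.isUnit_iff_isUnit_det _).mp hM'.isUnit)
    -- Compare a diagonal entry, which exists since `0 < d`.
    have hentry := congrFun (congrFun heq ⟨0, hd⟩) ⟨0, hd⟩
    simpa using hentry
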